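/- arXiv:2201.00847 — 2 statements merged into one kernel-verified Lean document; each statement's English description precedes it below -/
import Mathlib

section
/- Let M be a finite R-module of finite G_C-dimension. Then grade_R(Ext_R^i(M,C)) ≥ i for every i > 0. -/
open CategoryTheory TensorProduct

noncomputable section

universe u

variable (R : Type u) [CommRing R]

/-- The `i`-th Ext module `Ext_R^i(M, N)`. -/
def ExtM (M N : ModuleCat.{u} R) (i : ℕ) : ModuleCat.{u} R :=
  ((Ext R (ModuleCat.{u} R) i).obj (Opposite.op M)).obj N

/-- The `i`-th Tor module `Tor_i^R(M, N)`. -/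
def TorM (M N : ModuleCat.{u} R) (i : ℕ) : ModuleCat.{u} R :=
  ((Tor (ModuleCat.{u} R) i).obj M).obj N

/-- The biduality (evaluation) map `M → Hom_R(Hom_R(M, C), C)`. -/
def bidualityMap (C M : ModuleCat.{u} R) :
    ↥M →ₗ[R] ((↥M →ₗ[R] ↥C) →ₗ[R] ↥C) :=
  (LinearMap.id : (↥M →ₗ[R] ↥C) →ₗ[R] (↥M →ₗ[R] ↥C)).flip

/-- `C` is a semidualizing `R`-module. -/
def IsSemidualizing (C : ModuleCat.{u} R) : Prop :=
  Module.Finite R ↥C ∧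
  Function.Bijective (fun r : R => (r • LinearMap.id : ↥C →ₗ[R] ↥C)) ∧
  ∀ i : ℕ, 0 < i → Subsingleton (ExtM R C C i)

/-- `M` is totally `C`-reflexive. -/
def IsTotallyCReflexive (C M : ModuleCat.{u} R) : Prop :=
  Module.Finite R ↥M ∧
  Function.Bijective (bidualityMap R C M) ∧
  (∀ i : ℕ, 0 < i → Subsingleton (ExtM R M C i)) ∧
  (∀ i : ℕ, 0 < i → Subsingleton (ExtM R (ModuleCat.of R (↥M →ₗ[R] ↥C)) C i))

/-- `G_C`-dimension of `M` is at most `n`: there is an exact sequence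
`0 → X_n → ⋯ → X_0 → M → 0` with each `X_i` totally `C`-reflexive. -/
def gcdimLE (C : ModuleCat.{u} R) : ℕ → ModuleCat.{u} R → Prop
  | 0, M => IsTotallyCReflexive R C M
  | n+1, M => ∃ (X K : ModuleCat.{u} R) (f : ↥K →ₗ[R] ↥X) (g : ↥X →ₗ[R] ↥M),
      Function.Injective f ∧ Function.Surjective g ∧
      LinearMap.ker g = LinearMap.range f ∧
      IsTotallyCReflexive R C X ∧ gcdimLE C n K

/-- The `G_C`-dimension of `M`, as an element of `ℕ∞`. -/
def gcdim (C M : ModuleCat.{u} R) : ℕ∞ :=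
  sInf ((fun n : ℕ => (n : ℕ∞)) '' {n | gcdimLE R C n M})

/-- `grade_R(M) = inf { i | Ext_R^i(M, R) ≠ 0 }`, with `grade 0 = ∞`. -/
def gradeR (M : ModuleCat.{u} R) : ℕ∞ :=
  sInf ((fun i : ℕ => (i : ℕ∞)) ''
    {i | ¬ Subsingleton (ExtM R M (ModuleCat.of R R) i)})

/-- Reduced grade of `M` with respect to `C`. -/
def rgrade (C M : ModuleCat.{u} R) : ℕ∞ :=
  sInf ((fun i : ℕ => (i : ℕ∞)) ''
    {i | 0 < i ∧ ¬ Subsingleton (ExtM R M C i)})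

/-- `M` is reduced `G_C`-perfect. -/
def IsReducedGCPerfect (C M : ModuleCat.{u} R) : Prop :=
  gcdim R C M ≠ ⊤ ∧ rgrade R C M = gcdim R C M

/-- `M` is `G_C`-perfect. -/
def IsGCPerfect (C M : ModuleCat.{u} R) : Prop :=
  gcdim R C M ≠ ⊤ ∧ gradeR R M = gcdim R C M

/-- `π : P → M` is a projective cover: `P` projective, `π` surjective with superfluous kernel. -/
def IsProjectiveCover {P M : ModuleCat.{u} R} (π : ↥P →ₗ[R] ↥M) : Prop :=
  Module.Projective R ↥P ∧ Function.Surjective π ∧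
  ∀ N : Submodule R ↥P, N ⊔ LinearMap.ker π = ⊤ → N = ⊤

/-- `P₁ →d P₀ →π M → 0` is a minimal projective presentation of `M`. -/
def IsMinimalPresentation {P1 P0 M : ModuleCat.{u} R}
    (d : ↥P1 →ₗ[R] ↥P0) (π : ↥P0 →ₗ[R] ↥M) : Prop :=
  Module.Finite R ↥P1 ∧ Module.Finite R ↥P0 ∧
  IsProjectiveCover R π ∧
  LinearMap.range d = LinearMap.ker π ∧
  Module.Projective R ↥P1 ∧
  ∀ N : Submodule R ↥P1, N ⊔ LinearMap.ker d = ⊤ → N = ⊤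

/-- `T` is (a module isomorphic to) the transpose `Tr_C(M)` of `M` with respect to `C`,
computed from a minimal projective presentation of `M`. -/
def IsTransposeC (C M T : ModuleCat.{u} R) : Prop :=
  ∃ (P1 P0 : ModuleCat.{u} R) (d : ↥P1 →ₗ[R] ↥P0) (π : ↥P0 →ₗ[R] ↥M),
    IsMinimalPresentation R d π ∧
    Nonempty (↥T ≃ₗ[R]
      ((↥P1 →ₗ[R] ↥C) ⧸ LinearMap.range (LinearMap.lcomp R ↥C d)))

/-- `T` is the usual Auslander transpose `Tr(M) = Tr_R(M)`. -/
def IsTranspose (M T : ModuleCat.{u} R) : Prop :=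
  IsTransposeC R (ModuleCat.of R R) M T

/-- `S` is (a module isomorphic to) the first syzygy `Ω N`, i.e. the kernel of a
projective cover of `N`. -/
def IsSyzygyOf (N S : ModuleCat.{u} R) : Prop :=
  ∃ (P : ModuleCat.{u} R) (π : ↥P →ₗ[R] ↥N),
    Module.Finite R ↥P ∧ IsProjectiveCover R π ∧
    Nonempty (↥S ≃ₗ[R] LinearMap.ker π)

/-- `S` is (a module isomorphic to) the `n`-th syzygy `Ωⁿ M`. -/
def IsNthSyzygy : ℕ → ModuleCat.{u} R → ModuleCat.{u} R → Prop
  | 0, M, S => Nonempty (↥S ≃ₗ[R] ↥M)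
  | n+1, M, S => ∃ K : ModuleCat.{u} R, IsNthSyzygy n M K ∧ IsSyzygyOf R K S

/-- `L` is (a module isomorphic to) `λ M = Ω Tr M`. -/
def IsLambda (M L : ModuleCat.{u} R) : Prop :=
  ∃ T : ModuleCat.{u} R, IsTranspose R M T ∧ IsSyzygyOf R T L

/-- `M` is horizontally linked, i.e. `M ≅ λλM`. -/
def IsHorizontallyLinked (M : ModuleCat.{u} R) : Prop :=
  ∃ L L2 : ModuleCat.{u} R, IsLambda R M L ∧ IsLambda R L L2 ∧
    Nonempty (↥M ≃ₗ[R] ↥L2)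

/-- `M` is stable: it has no non-zero projective direct summand. -/
def IsStable (M : ModuleCat.{u} R) : Prop :=
  ∀ (P N : ModuleCat.{u} R), Module.Projective R ↥P →
    Nonempty (↥M ≃ₗ[R] (↥P × ↥N)) → Subsingleton ↥P

/-- `N` belongs to the Auslander class `A_C`. -/
def MemAuslanderClass (C N : ModuleCat.{u} R) : Prop :=
  Function.Bijective (TensorProduct.mk R ↥N ↥C) ∧
  (∀ i : ℕ, 0 < i → Subsingleton (TorM R C N i)) ∧
  (∀ i : ℕ, 0 < i → Subsingleton
    (ExtM R C (ModuleCat.of R (↥N ⊗[R] ↥C)) i))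

/-- `R` is semiperfect: every finite `R`-module has a projective cover. -/
def IsSemiperfectRing : Prop :=
  ∀ M : ModuleCat.{u} R, Module.Finite R ↥M →
    ∃ (P : ModuleCat.{u} R) (π : ↥P →ₗ[R] ↥M),
      Module.Finite R ↥P ∧ IsProjectiveCover R π

/-- Depth over a local ring, via Ext from the residue field. -/
def rdepth [IsLocalRing R] (M : ModuleCat.{u} R) : ℕ∞ :=
  sInf ((fun i : ℕ => (i : ℕ∞)) ''
    {i | ¬ Subsingleton
      (ExtM R (ModuleCat.of R (IsLocalRing.ResidueField R)) M i)})

/-- Projective dimension at most `n`. -/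
def pdimLE : ℕ → ModuleCat.{u} R → Prop
  | 0, M => Module.Projective R ↥M
  | n+1, M => ∃ (X K : ModuleCat.{u} R) (f : ↥K →ₗ[R] ↥X) (g : ↥X →ₗ[R] ↥M),
      Function.Injective f ∧ Function.Surjective g ∧
      LinearMap.ker g = LinearMap.range f ∧
      Module.Projective R ↥X ∧ pdimLE n K

/-- Projective dimension, as an element of `ℕ∞`. -/
def pdim (M : ModuleCat.{u} R) : ℕ∞ :=
  sInf ((fun n : ℕ => (n : ℕ∞)) '' {n | pdimLE R n M})

/-- `M` is `C`-`k`-torsionless. -/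
def IsCkTorsionless (C M : ModuleCat.{u} R) (k : ℕ) : Prop :=
  k = 0 ∨ ∀ T : ModuleCat.{u} R, IsTransposeC R C M T →
    ∀ i : ℕ, 1 ≤ i → i ≤ k → Subsingleton (ExtM R T C i)

/-- `M` is a `C`-syzygy: it embeds into `P ⊗_R C` with `P` finite projective. -/
def IsCSyzygy (C M : ModuleCat.{u} R) : Prop :=
  ∃ (P : ModuleCat.{u} R), Module.Finite R ↥P ∧ Module.Projective R ↥P ∧
    ∃ f : ↥M →ₗ[R] (↥P ⊗[R] ↥C), Function.Injective f


/-- There is an exact sequence `0 → N → X_k → ⋯ → X_1 → M → 0` of finite `R`-modules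
with `Ext_R^i(X_j, C) = 0` for all `i > 0` and all `j`. -/
def ExtVanishingChain (C : ModuleCat.{u} R) : ℕ → ModuleCat.{u} R → ModuleCat.{u} R → Prop
  | 0, N, M => Nonempty (↥N ≃ₗ[R] ↥M)
  | k+1, N, M => ∃ (X K : ModuleCat.{u} R) (f : ↥K →ₗ[R] ↥X) (g : ↥X →ₗ[R] ↥M),
      Function.Injective f ∧ Function.Surjective g ∧
      LinearMap.ker g = LinearMap.range f ∧
      Module.Finite R ↥X ∧ (∀ i : ℕ, 0 < i → Subsingleton (ExtM R X C i)) ∧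
      ExtVanishingChain C k N K

/-! Resolve `M` by totally `C`-reflexive modules. The `C`-dual of the resolution is a complex `Y` of
modules with vanishing higher `Ext(-, C)` and with `H^i(Y) = Ext^i(M, C)` for `i > 0`, and by
biduality `Hom(Y, C)` is the exact resolution again. Descending from the end of `Y`, one finds that
`Hom(H^i(Y), C) = 0`, so `Ext^i(M, C)` is killed by a `C`-regular element `r`. Replacing `C` by
`C / r C` preserves the vanishing of `Ext` and costs one degree of exactness of `Hom(Y, C)`, so the
step can be made `i` times and gives a `C`-regular sequence of length `i` killing `Ext^i(M, C)`.
As `Ext^j(C, C) = 0` for `j > 0`, this sequence is also regular on `Hom(C, C) = R`, which bounds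
the grade. -/

section Comparison

variable {R} {M : ModuleCat.{u} R}

/-- `ExtM R M N j` computed from a projective resolution `P` of `M`, as cocycles modulo coboundaries
of `Hom(P, N)` at `Hom(P_j, N)`. -/
def extMEquivCohomology (P : ProjectiveResolution M) (N : ModuleCat.{u} R) (i j k : ℕ)
    (hi : (ComplexShape.up ℕ).prev j = i) (hk : (ComplexShape.up ℕ).next j = k) :
    ExtM R M N j ≃ₗ[R]
      ((P.complex.linearYonedaObj R N).sc' i j k).moduleCatLeftHomologyData.H :=
  (P.isoExt j N ≪≫
    ShortComplex.homologyMapIso ((P.complex.linearYonedaObj R N).isoSc' i j k hi hk) ≪≫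
    ShortComplex.moduleCatHomologyIso _).toLinearEquiv

lemma smul_extMk (P : ProjectiveResolution M) {N : ModuleCat.{u} R} {n m : ℕ} (hm : n + 1 = m)
    (r : R) (f : P.complex.X n ⟶ N) (hf : P.complex.d m n ≫ f = 0) :
    P.extMk (r • f) m hm (by rw [Linear.comp_smul, hf, smul_zero]) = r • P.extMk f m hm hf := by
  rw [Abelian.Ext.smul_eq_comp_mk₀, ProjectiveResolution.extMk_comp_mk₀]
  simp only [Linear.comp_smul, Category.comp_id]

/-- The map sending a cocycle of `Hom(P, N)` in positive degree to its class in `Ext`. -/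
def extMkLinear (P : ProjectiveResolution M) (N : ModuleCat.{u} R) (n : ℕ) :
    LinearMap.ker ((P.complex.linearYonedaObj R N).sc' n (n + 1) (n + 2)).g.hom →ₗ[R]
      Abelian.Ext M N (n + 1) where
  toFun f := P.extMk (f.1 : P.complex.X (n + 1) ⟶ N) (n + 2) rfl f.2
  map_add' f g := (P.add_extMk (f.1 : P.complex.X (n + 1) ⟶ N) (g.1 : P.complex.X (n + 1) ⟶ N)
    (n + 2) rfl f.2 g.2).symm
  map_smul' r f := smul_extMk P rfl r (f.1 : P.complex.X (n + 1) ⟶ N) f.2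

lemma extMkLinear_surjective (P : ProjectiveResolution M) (N : ModuleCat.{u} R) (n : ℕ) :
    Function.Surjective (extMkLinear P N n) := by
  intro x
  obtain ⟨f, hf, rfl⟩ := P.extMk_surjective x (n + 2) rfl
  exact ⟨⟨f, hf⟩, rfl⟩

lemma ker_extMkLinear (P : ProjectiveResolution M) (N : ModuleCat.{u} R) (n : ℕ) :
    LinearMap.ker (extMkLinear P N n) = LinearMap.range
      ((P.complex.linearYonedaObj R N).sc' n (n + 1) (n + 2)).moduleCatToCycles := by
  ext f
  refine (P.extMk_eq_zero_iff (f.1 : P.complex.X (n + 1) ⟶ N) (n + 2) rfl f.2 n rfl).trans ?_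
  exact ⟨fun ⟨g, hg⟩ ↦ ⟨g, Subtype.ext hg⟩, fun ⟨g, hg⟩ ↦ ⟨g, congrArg Subtype.val hg⟩⟩

/-- In positive degrees, the derived functor `ExtM` agrees with Mathlib's `Abelian.Ext`. -/
def extMEquivExt (M N : ModuleCat.{u} R) (n : ℕ) :
    ExtM R M N (n + 1) ≃ₗ[R] Abelian.Ext M N (n + 1) :=
  let P := projectiveResolution M
  extMEquivCohomology P N n (n + 1) (n + 2) (by simp) (by simp) ≪≫ₗ
    ((Submodule.quotEquivOfEq _ _ (ker_extMkLinear P N n).symm).trans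
      ((extMkLinear P N n).quotKerEquivOfSurjective (extMkLinear_surjective P N n)))

lemma subsingleton_extM_zero {N : ModuleCat.{u} R} [Subsingleton (M ⟶ N)] :
    Subsingleton (ExtM R M N 0) := by
  let P := projectiveResolution M
  have cocycle_eq_zero : Subsingleton
      (LinearMap.ker ((P.complex.linearYonedaObj R N).sc' 0 0 1).g.hom) := by
    refine subsingleton_of_forall_eq 0 fun f ↦ Subtype.ext ?_
    have factors := P.exact₀.g_desc (f.1 : P.complex.X 0 ⟶ N) f.2
    exact factors.symm.trans
      ((congrArg _ (Subsingleton.elim (α := M ⟶ N) _ 0)).trans Limits.comp_zero)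
  exact (extMEquivCohomology P N 0 0 1 (by simp) (by simp)).toEquiv.subsingleton_congr.2
    (inferInstanceAs (Subsingleton (LinearMap.ker _ ⧸ LinearMap.range _)))

lemma subsingleton_extM {N : ModuleCat.{u} R} {n : ℕ} (h : Subsingleton (Abelian.Ext M N n)) :
    Subsingleton (ExtM R M N n) := by
  cases n with
  | zero =>
    have : Subsingleton (M ⟶ N) := Abelian.Ext.addEquiv₀.symm.subsingleton
    exact subsingleton_extM_zero
  | succ n => exact (extMEquivExt M N n).subsingleton

end Comparison

open scoped Pointwise

section ShortExact

variable {R}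
variable {A B D T : Type u} [AddCommGroup A] [Module R A] [AddCommGroup B] [Module R B]
  [AddCommGroup D] [Module R D] [AddCommGroup T] [Module R T]

variable (R A B) in
/-- `Ext_R^j(A, B)` for unbundled modules. -/
abbrev ModExt (j : ℕ) : Type u :=
  Abelian.Ext (ModuleCat.of R A) (ModuleCat.of R B) j

/-- `0 → A → B → D → 0` is a short exact sequence of unbundled modules. -/
structure IsShortExact (f : A →ₗ[R] B) (g : B →ₗ[R] D) : Prop where
  injective : Function.Injective f
  surjective : Function.Surjective g
  exact : Function.Exact f g

variable {f : A →ₗ[R] B} {g : B →ₗ[R] D}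

lemma IsShortExact.shortExact (h : IsShortExact f g) :
    (ModuleCat.shortComplexOfCompEqZero f g h.exact.linearMap_comp_eq_zero).ShortExact :=
  ModuleCat.shortComplex_shortExact _ h.exact h.injective h.surjective

lemma isShortExact_subtype_rangeRestrict (g : B →ₗ[R] D) :
    IsShortExact (LinearMap.ker g).subtype g.rangeRestrict where
  injective := Subtype.val_injective
  surjective := g.surjective_rangeRestrict
  exact := LinearMap.exact_iff.2 (by rw [LinearMap.ker_rangeRestrict, Submodule.range_subtype])

lemma isShortExact_inclusion_mkQ {P Q : Submodule R A} (h : P ≤ Q) :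
    IsShortExact (Submodule.inclusion h) (P.submoduleOf Q).mkQ where
  injective := Submodule.inclusion_injective h
  surjective := Submodule.mkQ_surjective _
  exact := LinearMap.exact_iff.2 (by
    rw [Submodule.ker_mkQ, Submodule.range_inclusion, Submodule.submoduleOf])

lemma isShortExact_lsmul_mkQ {r : R} (hr : IsSMulRegular A r) :
    IsShortExact (LinearMap.lsmul R A r) (Submodule.mkQ (r • (⊤ : Submodule R A))) where
  injective := hr
  surjective := Submodule.mkQ_surjective _
  exact := LinearMap.exact_lsmul_mkQ_smul_top A r

end ShortExact

section ExtShortExact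

variable {R}
variable {A B D T : Type u} [AddCommGroup A] [Module R A] [AddCommGroup B] [Module R B]
  [AddCommGroup D] [Module R D] [AddCommGroup T] [Module R T] {S : Submonoid R}
  {f : A →ₗ[R] B} {g : B →ₗ[R] D} {j : ℕ}

variable (R A B) in
/-- `Ext⁰` is `Hom`. -/
def modExtZeroEquiv : ModExt R A B 0 ≃ₗ[R] (A →ₗ[R] B) :=
  Abelian.Ext.linearEquiv₀ ≪≫ₗ ModuleCat.homLinearEquiv

namespace IsShortExact

lemma isTorsion'_ext_left (h : IsShortExact f g) (hB : Module.IsTorsion' (ModExt R B T j) S)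
    (hD : Module.IsTorsion' (ModExt R D T (j + 1)) S) :
    Module.IsTorsion' (ModExt R A T j) S := by
  intro e
  obtain ⟨s, hs⟩ := @hD (h.shortExact.extClass.comp e (add_comm 1 j))
  rw [Submonoid.smul_def, ← Abelian.Ext.comp_smul] at hs
  obtain ⟨x, hx⟩ := Abelian.Ext.contravariant_sequence_exact₁ h.shortExact _ _ _ hs
  obtain ⟨t, ht⟩ := @hB x
  rw [Submonoid.smul_def] at ht
  exact ⟨t * s, by rw [Submonoid.smul_def, Submonoid.coe_mul, mul_smul, ← hx,
    ← Abelian.Ext.comp_smul, ht, Abelian.Ext.comp_zero]⟩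

lemma exists_comp_eq_smul (h : IsShortExact f g)
    (hD : Module.IsTorsion' (ModExt R D T 1) S) (φ : A →ₗ[R] T) :
    ∃ s : S, ∃ ψ : B →ₗ[R] T, ψ ∘ₗ f = s • φ := by
  obtain ⟨s, hs⟩ := @hD (h.shortExact.extClass.comp
    (Abelian.Ext.mk₀ (ModuleCat.ofHom φ)) (add_zero 1))
  rw [Submonoid.smul_def, ← Abelian.Ext.comp_smul, ← Abelian.Ext.mk₀_smul] at hs
  obtain ⟨x, hx⟩ := Abelian.Ext.contravariant_sequence_exact₁ h.shortExact _ _ _ hs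
  obtain ⟨ψ, rfl⟩ := (Abelian.Ext.linearEquiv₀ (R := R)).symm.surjective x
  have comp_eq := (Abelian.Ext.mk₀_comp_mk₀ _ _).symm.trans hx
  exact ⟨s, ψ.hom, congrArg ModuleCat.Hom.hom
    ((Abelian.Ext.linearEquiv₀ (R := R)).symm.injective comp_eq)⟩

lemma exists_comp_eq (h : IsShortExact f g) (hA : Subsingleton (ModExt R T A 1))
    (φ : T →ₗ[R] D) : ∃ ψ : T →ₗ[R] B, g ∘ₗ ψ = φ := by
  obtain ⟨x, hx⟩ := Abelian.Ext.covariant_sequence_exact₃ _ h.shortExact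
    (Abelian.Ext.mk₀ (ModuleCat.ofHom φ)) (zero_add 1) (Subsingleton.elim _ _)
  obtain ⟨ψ, rfl⟩ := (Abelian.Ext.linearEquiv₀ (R := R)).symm.surjective x
  have comp_eq := (Abelian.Ext.mk₀_comp_mk₀ _ _).symm.trans hx
  exact ⟨ψ.hom, congrArg ModuleCat.Hom.hom
    ((Abelian.Ext.linearEquiv₀ (R := R)).symm.injective comp_eq)⟩

lemma exists_comp_eq_of_comp_eq_zero (h : IsShortExact f g) {φ : T →ₗ[R] B}
    (hφ : g ∘ₗ φ = 0) : ∃ ψ : T →ₗ[R] A, f ∘ₗ ψ = φ := by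
  have mem_range (t : T) : φ t ∈ LinearMap.range f :=
    (h.exact (φ t)).1 (LinearMap.congr_fun hφ t)
  refine ⟨(LinearEquiv.ofInjective f h.injective).symm ∘ₗ φ.codRestrict _ mem_range, ?_⟩
  ext t
  exact congrArg Subtype.val
    ((LinearEquiv.ofInjective f h.injective).apply_symm_apply ⟨φ t, mem_range t⟩)

lemma subsingleton_ext_right (h : IsShortExact f g) (hB : Subsingleton (ModExt R T B j))
    (hA : Subsingleton (ModExt R T A (j + 1))) : Subsingleton (ModExt R T D j) := by
  refine subsingleton_of_forall_eq 0 fun e ↦ ?_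
  obtain ⟨x, rfl⟩ := Abelian.Ext.covariant_sequence_exact₃ _ h.shortExact e rfl
    (Subsingleton.elim _ _)
  rw [Subsingleton.elim x 0, Abelian.Ext.zero_comp]

end IsShortExact

lemma smul_ext_eq_zero {r : R} (hr : r ∈ Module.annihilator R A) (e : ModExt R A B j) :
    r • e = 0 := by
  have smul_id : r • 𝟙 (ModuleCat.of R A) = 0 := by
    ext a
    exact Module.mem_annihilator.1 hr a
  rw [← Abelian.Ext.mk₀_id_comp e, ← Abelian.Ext.smul_comp, ← Abelian.Ext.mk₀_smul, smul_id,
    Abelian.Ext.mk₀_zero, Abelian.Ext.zero_comp]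

lemma subsingleton_ext_of_subsingleton [Subsingleton A] : Subsingleton (ModExt R A B j) :=
  subsingleton_of_forall_eq 0 fun e ↦ (one_smul R e).symm.trans
    (smul_ext_eq_zero (Module.mem_annihilator.2 fun _ ↦ Subsingleton.elim _ _) e)

lemma isTorsion'_of_subsingleton (h : Subsingleton A) : Module.IsTorsion' A S :=
  fun _ ↦ ⟨1, h.elim _ _⟩

lemma subsingleton_ext_succ_of_quotSMulTop {r : R} (hr : r ∈ Module.annihilator R A)
    (hreg : IsSMulRegular B r) (h : Subsingleton (ModExt R A (QuotSMulTop r B) j)) :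
    Subsingleton (ModExt R A B (j + 1)) := by
  refine subsingleton_of_forall_eq 0 fun e ↦ ?_
  have comp_smul_eq_zero : e.comp (Abelian.Ext.mk₀ (ModuleCat.ofHom (LinearMap.lsmul R B r)))
      (add_zero _) = 0 := by
    rw [← smul_ext_eq_zero hr e, Abelian.Ext.smul_eq_comp_mk₀]
    rfl
  obtain ⟨x, rfl⟩ := Abelian.Ext.covariant_sequence_exact₁ _
    (isShortExact_lsmul_mkQ hreg).shortExact e comp_smul_eq_zero rfl
  rw [show x = 0 from Subsingleton.elim (α := ModExt R A (QuotSMulTop r B) j) x 0,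
    Abelian.Ext.zero_comp]

end ExtShortExact

section DualAcyclicity

variable {R}
variable {A B D T T' T'' : Type u} [AddCommGroup A] [Module R A] [AddCommGroup B] [Module R B]
  [AddCommGroup D] [Module R D] [AddCommGroup T] [Module R T]
  [AddCommGroup T'] [Module R T'] [AddCommGroup T''] [Module R T'']

/-- The cohomology at `B` of a complex `A → B → D`. -/
abbrev Cohomology (α : A →ₗ[R] B) (β : B →ₗ[R] D) : Type u :=
  LinearMap.ker β ⧸ (LinearMap.range α).submoduleOf (LinearMap.ker β)

variable {α : A →ₗ[R] B} {β : B →ₗ[R] D}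

/-- Up to a `T`-regular scalar, a map `H → T` is the restriction to `ker β` of a map `B → T`
vanishing on the image of `α`; by exactness the latter factors through `β`, so it is zero on
`ker β`. -/
lemma subsingleton_cohomology_linearMap (hβα : β ∘ₗ α = 0)
    (hext : Module.IsTorsion' (ModExt R (LinearMap.range β) T 1) (nonZeroSMulDivisors R T))
    (hexact : Function.Exact (LinearMap.lcomp R T β) (LinearMap.lcomp R T α)) :
    Subsingleton (Cohomology α β →ₗ[R] T) := by
  refine subsingleton_of_forall_eq 0 fun h ↦ Submodule.linearMap_qext _ ?_
  obtain ⟨s, ψ, hψ⟩ :=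
    (isShortExact_subtype_rangeRestrict β).exists_comp_eq_smul hext (h ∘ₗ Submodule.mkQ _)
  have ψ_apply (z : LinearMap.ker β) : ψ z = s • h (Submodule.Quotient.mk z) :=
    LinearMap.congr_fun hψ z
  have ψ_comp_α : LinearMap.lcomp R T α ψ = 0 := by
    ext a
    have mk_eq_zero : (Submodule.Quotient.mk ⟨α a, LinearMap.congr_fun hβα a⟩ :
        Cohomology α β) = 0 := (Submodule.Quotient.mk_eq_zero _).2 ⟨a, rfl⟩
    exact (ψ_apply ⟨α a, LinearMap.congr_fun hβα a⟩).trans (by simp [mk_eq_zero])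
  obtain ⟨G, rfl⟩ := (hexact ψ).1 ψ_comp_α
  ext z
  refine (mem_nonZeroSMulDivisors_iff.1 s.2) _ ?_
  exact (ψ_apply z).symm.trans ((congrArg G z.2).trans (map_zero G))

lemma isTorsion'_ext_range_of_mem_annihilator {S : Submonoid R} {s : R} (hs : s ∈ S)
    (hann : s ∈ Module.annihilator R (Cohomology α β)) (hβα : β ∘ₗ α = 0)
    (hB : ∀ j, Subsingleton (ModExt R B T (j + 1)))
    (hβ : ∀ j, Module.IsTorsion' (ModExt R (LinearMap.range β) T (j + 1)) S) (j : ℕ) :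
    Module.IsTorsion' (ModExt R (LinearMap.range α) T (j + 1)) S := by
  have ker_torsion : Module.IsTorsion' (ModExt R (LinearMap.ker β) T (j + 1)) S :=
    (isShortExact_subtype_rangeRestrict β).isTorsion'_ext_left
      (isTorsion'_of_subsingleton (hB j)) (hβ (j + 1))
  exact (isShortExact_inclusion_mkQ (LinearMap.range_le_ker_iff.2 hβα)).isTorsion'_ext_left
    ker_torsion fun e ↦ ⟨⟨s, hs⟩, smul_ext_eq_zero hann e⟩

lemma exact_lcomp_of_isShortExact {Y₀ : Type u} [AddCommGroup Y₀] [Module R Y₀]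
    {γ : Y₀ →ₗ[R] A} {f : T' →ₗ[R] T} {g : T →ₗ[R] T''} (hfg : IsShortExact f g)
    (hαγ : α ∘ₗ γ = 0) (hβα : β ∘ₗ α = 0) (hext : Subsingleton (ModExt R B T' 1))
    (hexact' : Function.Exact (LinearMap.lcomp R T' α) (LinearMap.lcomp R T' γ))
    (hexact : Function.Exact (LinearMap.lcomp R T β) (LinearMap.lcomp R T α)) :
    Function.Exact (LinearMap.lcomp R T'' β) (LinearMap.lcomp R T'' α) := by
  refine fun h ↦ ⟨fun hα ↦ ?_, ?_⟩
  · replace hα : h ∘ₗ α = 0 := hα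
    obtain ⟨L, rfl⟩ := hfg.exists_comp_eq hext h
    obtain ⟨q, hq⟩ : ∃ q : A →ₗ[R] T', f ∘ₗ q = L ∘ₗ α :=
      hfg.exists_comp_eq_of_comp_eq_zero (by rw [← LinearMap.comp_assoc, hα])
    have q_comp_γ : q ∘ₗ γ = 0 := (LinearMap.cancel_left hfg.injective).1 (by
      rw [← LinearMap.comp_assoc, hq, LinearMap.comp_assoc, hαγ, LinearMap.comp_zero,
        LinearMap.comp_zero])
    obtain ⟨m, rfl⟩ := (hexact' q).1 q_comp_γ
    have corrected_comp_α : (L - f ∘ₗ m) ∘ₗ α = 0 := by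
      rw [LinearMap.sub_comp, ← hq, LinearMap.comp_assoc]
      exact sub_self _
    obtain ⟨G, hG⟩ := (hexact (L - f ∘ₗ m)).1 corrected_comp_α
    refine ⟨g ∘ₗ G, ?_⟩
    calc (g ∘ₗ G) ∘ₗ β = g ∘ₗ (L - f ∘ₗ m) := congrArg (g ∘ₗ ·) hG
      _ = g ∘ₗ L := by
        rw [LinearMap.comp_sub, ← LinearMap.comp_assoc, hfg.exact.linearMap_comp_eq_zero,
          LinearMap.zero_comp, sub_zero]
  · rintro ⟨G, rfl⟩
    change (G ∘ₗ β) ∘ₗ α = 0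
    rw [LinearMap.comp_assoc, hβα, LinearMap.comp_zero]

end DualAcyclicity

section RegularSequences

open RingTheory.Sequence

variable {R}
variable {Y : ℕ → Type u} [∀ l, AddCommGroup (Y l)] [∀ l, Module R (Y l)]
  {T : Type u} [AddCommGroup T] [Module R T]

/-- The complex `(Y, d)` consists of modules with `Ext_R^j(-, T) = 0` for `j > 0`, and
`Hom_R(Y, T)` is exact at `Hom_R(Y l, T)` for all `l > k`. -/
structure IsHomAcyclicAbove (d : ∀ l, Y l →ₗ[R] Y (l + 1)) (T : Type u) [AddCommGroup T]
    [Module R T] (k : ℕ) : Prop where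
  subsingleton_ext (l j : ℕ) : Subsingleton (ModExt R (Y l) T (j + 1))
  exact_lcomp {l : ℕ} (hl : k ≤ l) :
    Function.Exact (LinearMap.lcomp R T (d (l + 1))) (LinearMap.lcomp R T (d l))

namespace IsHomAcyclicAbove

variable {d : ∀ l, Y l →ₗ[R] Y (l + 1)} {k : ℕ}

lemma quotSMulTop (h : IsHomAcyclicAbove d T k) (hd : ∀ l, d (l + 1) ∘ₗ d l = 0) {r : R}
    (hr : IsSMulRegular T r) : IsHomAcyclicAbove d (QuotSMulTop r T) (k + 1) where
  subsingleton_ext l j := (isShortExact_lsmul_mkQ hr).subsingleton_ext_right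
    (h.subsingleton_ext l j) (h.subsingleton_ext l (j + 1))
  exact_lcomp {l} hl := by
    obtain ⟨l, rfl⟩ := Nat.exists_eq_add_one_of_ne_zero (Nat.ne_zero_of_lt hl)
    exact exact_lcomp_of_isShortExact (isShortExact_lsmul_mkQ hr) (hd l) (hd (l + 1))
      (h.subsingleton_ext _ 0) (h.exact_lcomp (by lia)) (h.exact_lcomp (by lia))

variable [IsNoetherianRing R] [Module.Finite R T]
  [∀ l, Module.Finite R (Cohomology (d l) (d (l + 1)))]

/-- Descending induction from the end of the complex: torsion of `Ext(im d^{l+1}, T)` makes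
`Hom(H^{l+1}, T)` vanish, hence a `T`-regular element kills `H^{l+1}`, and so `Ext(im d^l, T)` is
torsion. -/
lemma isTorsion'_ext_range (h : IsHomAcyclicAbove d T k) (hd : ∀ l, d (l + 1) ∘ₗ d l = 0)
    {n : ℕ} (hY : ∀ l > n, Subsingleton (Y l)) {l : ℕ} (hl : k ≤ l) (j : ℕ) :
    Module.IsTorsion' (ModExt R (LinearMap.range (d l)) T (j + 1)) (nonZeroSMulDivisors R T) := by
  induction hm : n - l generalizing l j with
  | zero =>
    have := hY (l + 1) (by lia)
    exact isTorsion'_of_subsingleton subsingleton_ext_of_subsingleton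
  | succ m ih =>
    have next (i : ℕ) := ih (l := l + 1) (by lia) i (by lia)
    obtain ⟨r, hann, hr⟩ := IsSMulRegular.subsingleton_linearMap_iff.1
      (subsingleton_cohomology_linearMap (hd l) (next 0) (h.exact_lcomp hl))
    exact isTorsion'_ext_range_of_mem_annihilator hr.mem_nonZeroSMulDivisors hann (hd l)
      (h.subsingleton_ext _) next j

lemma exists_isSMulRegular_mem_annihilator (h : IsHomAcyclicAbove d T k)
    (hd : ∀ l, d (l + 1) ∘ₗ d l = 0) {n : ℕ} (hY : ∀ l > n, Subsingleton (Y l)) {l : ℕ}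
    (hl : k ≤ l) :
    ∃ r ∈ Module.annihilator R (Cohomology (d l) (d (l + 1))), IsSMulRegular T r :=
  IsSMulRegular.subsingleton_linearMap_iff.1 (subsingleton_cohomology_linearMap (hd l)
    (h.isTorsion'_ext_range hd hY (hl.trans l.le_succ) 0) (h.exact_lcomp hl))

lemma exists_isWeaklyRegular (h : IsHomAcyclicAbove d T k)
    (hd : ∀ l, d (l + 1) ∘ₗ d l = 0) {n : ℕ} (hY : ∀ l > n, Subsingleton (Y l)) {l m : ℕ}
    (hm : k + m ≤ l + 1) :
    ∃ rs : List R, rs.length = m ∧ IsWeaklyRegular T rs ∧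
      ∀ r ∈ rs, r ∈ Module.annihilator R (Cohomology (d l) (d (l + 1))) := by
  induction m generalizing T k with
  | zero => exact ⟨[], rfl, .nil R T, by simp⟩
  | succ m ih =>
    obtain ⟨r, hann, hr⟩ := h.exists_isSMulRegular_mem_annihilator hd hY (l := l) (by lia)
    obtain ⟨rs, hlen, hreg, hmem⟩ := ih (h.quotSMulTop hd hr) (by lia)
    exact ⟨r :: rs, by simp [hlen], .cons hr hreg, by simpa [hann] using hmem⟩

end IsHomAcyclicAbove

variable {A B : Type u} [AddCommGroup A] [Module R A] [AddCommGroup B] [Module R B]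

lemma subsingleton_ext_of_isWeaklyRegular {rs : List R} (h : IsWeaklyRegular B rs)
    (hann : ∀ r ∈ rs, r ∈ Module.annihilator R A) {j : ℕ} (hj : j < rs.length) :
    Subsingleton (ModExt R A B j) := by
  induction rs generalizing B j with
  | nil => simp at hj
  | cons r rs ih =>
    obtain ⟨hr, hrs⟩ := (isWeaklyRegular_cons_iff B r rs).1 h
    have r_mem := hann r List.mem_cons_self
    cases j with
    | zero =>
      have := hr.linearMap_subsingleton_of_mem_annihilator r_mem
      exact (modExtZeroEquiv R A B).subsingleton
    | succ j =>
      exact subsingleton_ext_succ_of_quotSMulTop r_mem hr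
        (ih hrs (fun s hs ↦ hann s (List.mem_cons_of_mem r hs)) (Nat.lt_of_succ_lt_succ hj))

lemma ker_compRight_mkQ_smul_top {r : R} (hr : IsSMulRegular B r) :
    LinearMap.ker ((Submodule.mkQ (r • (⊤ : Submodule R B))).compRight R (M := A)) = r • ⊤ := by
  ext φ
  rw [Submodule.mem_smul_pointwise_iff_exists]
  constructor
  · intro hφ
    obtain ⟨ψ, hψ⟩ := (isShortExact_lsmul_mkQ hr).exists_comp_eq_of_comp_eq_zero hφ
    exact ⟨ψ, trivial, hψ⟩
  · rintro ⟨ψ, -, rfl⟩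
    ext a
    exact (LinearMap.exact_lsmul_mkQ_smul_top B r).apply_apply_eq_zero (ψ a)

/-- `Hom(A, B) / r Hom(A, B) ≃ Hom(A, B / r B)`, given by composition with `B → B / r B`. -/
def quotSMulTopLinearMapEquiv {r : R} (hr : IsSMulRegular B r)
    (hext : Subsingleton (ModExt R A B 1)) :
    QuotSMulTop r (A →ₗ[R] B) ≃ₗ[R] (A →ₗ[R] QuotSMulTop r B) :=
  (Submodule.quotEquivOfEq _ _ (ker_compRight_mkQ_smul_top hr).symm).trans
    (((Submodule.mkQ (r • (⊤ : Submodule R B))).compRight R).quotKerEquivOfSurjective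
      ((isShortExact_lsmul_mkQ hr).exists_comp_eq hext))

lemma isWeaklyRegular_linearMap {rs : List R} (h : IsWeaklyRegular B rs)
    (hext : ∀ j, Subsingleton (ModExt R A B (j + 1))) : IsWeaklyRegular (A →ₗ[R] B) rs := by
  induction rs generalizing B with
  | nil => exact .nil R _
  | cons r rs ih =>
    obtain ⟨hr, hrs⟩ := (isWeaklyRegular_cons_iff B r rs).1 h
    have hom_quot_regular : IsWeaklyRegular (A →ₗ[R] QuotSMulTop r B) rs :=
      ih hrs fun j ↦ (isShortExact_lsmul_mkQ hr).subsingleton_ext_right (hext j) (hext (j + 1))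
    refine .cons (fun φ ψ hφψ ↦ LinearMap.ext fun a ↦ hr (LinearMap.congr_fun hφψ a)) ?_
    exact ((quotSMulTopLinearMapEquiv hr (hext 0)).isWeaklyRegular_congr rs).2 hom_quot_regular

end RegularSequences

section DimensionShift

variable {R}
variable {A B D T : Type u} [AddCommGroup A] [Module R A] [AddCommGroup B] [Module R B]
  [AddCommGroup D] [Module R D] [AddCommGroup T] [Module R T]
  {f : A →ₗ[R] B} {g : B →ₗ[R] D}

namespace IsShortExact

variable (T) in
/-- The connecting map of the long exact sequence of `Ext(-, T)`. -/
def connecting (h : IsShortExact f g) (j : ℕ) : ModExt R A T j →ₗ[R] ModExt R D T (j + 1) :=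
  h.shortExact.extClass.precompOfLinear R (ModuleCat.of R T) (add_comm 1 j)

lemma connecting_surjective (h : IsShortExact f g) {j : ℕ}
    (hB : Subsingleton (ModExt R B T (j + 1))) : Function.Surjective (h.connecting T j) :=
  fun e ↦ Abelian.Ext.contravariant_sequence_exact₃ h.shortExact _ e (hB.elim _ _)
    (add_comm 1 j)

lemma connecting_injective (h : IsShortExact f g) {j : ℕ} (hB : Subsingleton (ModExt R B T j)) :
    Function.Injective (h.connecting T j) := by
  refine (injective_iff_map_eq_zero _).2 fun e he ↦ ?_
  obtain ⟨x, rfl⟩ :=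
    Abelian.Ext.contravariant_sequence_exact₁ h.shortExact _ e (add_comm 1 j) he
  rw [show x = 0 from Subsingleton.elim (α := ModExt R B T j) x 0, Abelian.Ext.comp_zero]

/-- Dimension shifting along `0 → A → B → D → 0`. -/
def extShiftEquiv (h : IsShortExact f g) (hB : ∀ j, Subsingleton (ModExt R B T (j + 1))) (j : ℕ) :
    ModExt R A T (j + 1) ≃ₗ[R] ModExt R D T (j + 2) :=
  LinearEquiv.ofBijective (h.connecting T (j + 1))
    ⟨h.connecting_injective (hB j), h.connecting_surjective (hB (j + 1))⟩

lemma ker_connecting_zero (h : IsShortExact f g) :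
    LinearMap.ker (h.connecting T 0 ∘ₗ (modExtZeroEquiv R A T).symm.toLinearMap) =
      LinearMap.range (LinearMap.lcomp R T f) := by
  ext φ
  refine ⟨fun hφ ↦ ?_, ?_⟩
  · obtain ⟨x, hx⟩ :=
      Abelian.Ext.contravariant_sequence_exact₁ h.shortExact _ _ (add_comm 1 0) hφ
    obtain ⟨ψ, rfl⟩ := (modExtZeroEquiv R B T).symm.surjective x
    exact ⟨ψ, (modExtZeroEquiv R A T).symm.injective
      ((Abelian.Ext.mk₀_comp_mk₀ _ _).symm.trans hx)⟩
  · rintro ⟨ψ, rfl⟩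
    have connecting_comp := h.shortExact.extClass_comp_assoc
      (Abelian.Ext.mk₀ (ModuleCat.ofHom ψ)) (h := add_comm 1 0)
    rw [Abelian.Ext.mk₀_comp_mk₀] at connecting_comp
    exact connecting_comp

/-- A map `A → T` modulo restrictions of maps `B → T` is the same as an extension class of `D`
by `T`. -/
def quotRangeLcompEquivExtOne (h : IsShortExact f g) (hB : Subsingleton (ModExt R B T 1)) :
    ((A →ₗ[R] T) ⧸ LinearMap.range (LinearMap.lcomp R T f)) ≃ₗ[R] ModExt R D T 1 :=
  (Submodule.quotEquivOfEq _ _ h.ker_connecting_zero.symm).trans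
    (LinearMap.quotKerEquivOfSurjective _
      ((h.connecting_surjective hB).comp (modExtZeroEquiv R A T).symm.surjective))

end IsShortExact

/-- If `ι` is an injection onto the cocycles at `B`, the cohomology at `B` is the cokernel of the
map by which the differential into `B` factors through `ι`. -/
def cohomologyCompEquiv {α : T →ₗ[R] A} {ι : A →ₗ[R] B} {β : B →ₗ[R] D}
    (hι : Function.Injective ι) (hex : Function.Exact ι β) :
    Cohomology (ι ∘ₗ α) β ≃ₗ[R] (A ⧸ LinearMap.range α) :=
  (Submodule.Quotient.equiv _ _ ((LinearEquiv.ofInjective ι hι).trans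
    (LinearEquiv.ofEq _ _ hex.linearMap_ker_eq.symm)) (by
      ext x
      refine ⟨?_, fun ⟨t, ht⟩ ↦ ⟨α t, ⟨t, rfl⟩, Subtype.ext ht⟩⟩
      rintro ⟨-, ⟨t, rfl⟩, rfl⟩
      exact ⟨t, rfl⟩)).symm

end DimensionShift

section Resolution

variable {R} {C M X : ModuleCat.{u} R}

lemma IsTotallyCReflexive.subsingleton_ext (h : IsTotallyCReflexive R C X) (j : ℕ) :
    Subsingleton (ModExt R X C (j + 1)) :=
  (extMEquivExt X C j).toEquiv.subsingleton_congr.1 (h.2.2.1 (j + 1) j.succ_pos)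

lemma IsTotallyCReflexive.subsingleton_ext_dual (h : IsTotallyCReflexive R C X) (j : ℕ) :
    Subsingleton (ModExt R (X →ₗ[R] C) C (j + 1)) :=
  (extMEquivExt _ C j).toEquiv.subsingleton_congr.1 (h.2.2.2 (j + 1) j.succ_pos)

lemma IsSemidualizing.subsingleton_ext (h : IsSemidualizing R C) (j : ℕ) :
    Subsingleton (ModExt R C C (j + 1)) :=
  (extMEquivExt C C j).toEquiv.subsingleton_congr.1 (h.2.2 (j + 1) j.succ_pos)

lemma isTotallyCReflexive_of_subsingleton [Subsingleton X] : IsTotallyCReflexive R C X :=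
  ⟨inferInstance, ⟨Function.injective_of_subsingleton _, Function.surjective_to_subsingleton _⟩,
    fun _ _ ↦ subsingleton_extM (subsingleton_ext_of_subsingleton (A := X) (B := C)),
    fun _ _ ↦ subsingleton_extM (subsingleton_ext_of_subsingleton (A := X →ₗ[R] C) (B := C))⟩

variable (C M) in
/-- A resolution of `M` by totally `C`-reflexive modules `term 0, …, term n`, cut into short exact
sequences `0 → syz (k + 1) → term k → syz k → 0` and continued by zero modules. -/
structure TotallyReflexiveResolution (n : ℕ) where
  syz : ℕ → ModuleCat.{u} R
  term : ℕ → ModuleCat.{u} R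
  ι (k : ℕ) : syz (k + 1) →ₗ[R] term k
  π (k : ℕ) : term k →ₗ[R] syz k
  syz_zero : syz 0 = M
  isShortExact (k : ℕ) : IsShortExact (ι k) (π k)
  reflexive (k : ℕ) : IsTotallyCReflexive R C (term k)
  subsingleton_term {k : ℕ} (hk : n < k) : Subsingleton (term k)

namespace TotallyReflexiveResolution

/-- A totally `C`-reflexive module resolves itself. -/
def ofReflexive (hM : IsTotallyCReflexive R C M) : TotallyReflexiveResolution C M 0 where
  syz | 0 => M | _ + 1 => ModuleCat.of R PUnit
  term | 0 => M | _ + 1 => ModuleCat.of R PUnit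
  ι _ := 0
  π | 0 => LinearMap.id | _ + 1 => LinearMap.id
  syz_zero := rfl
  isShortExact
    | 0 => ⟨Function.injective_of_subsingleton _, Function.surjective_id, fun x ↦ by
        simp [eq_comm]⟩
    | _ + 1 => ⟨Function.injective_of_subsingleton _, Function.surjective_id, fun x ↦ by
        simp⟩
  reflexive | 0 => hM | _ + 1 => isTotallyCReflexive_of_subsingleton
  subsingleton_term {k} hk := match k, hk with | _ + 1, _ => inferInstance

/-- Splice a resolution of `K` with `0 → K → X → M → 0`. -/
def cons {K : ModuleCat.{u} R} {n : ℕ} (Q : TotallyReflexiveResolution C K n)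
    (hX : IsTotallyCReflexive R C X) {f : K →ₗ[R] X} {g : X →ₗ[R] M} (hfg : IsShortExact f g) :
    TotallyReflexiveResolution C M (n + 1) where
  syz | 0 => M | k + 1 => Q.syz k
  term | 0 => X | k + 1 => Q.term k
  ι | 0 => f ∘ₗ (eqToHom Q.syz_zero).hom | k + 1 => Q.ι k
  π | 0 => g | k + 1 => Q.π k
  syz_zero := rfl
  isShortExact
    | 0 => by
      obtain ⟨syz, term, ι, π, rfl, -, -, -⟩ := Q
      exact hfg
    | k + 1 => Q.isShortExact k
  reflexive | 0 => hX | k + 1 => Q.reflexive k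
  subsingleton_term {k} hk := match k, hk with
    | _ + 1, hk => Q.subsingleton_term (Nat.lt_of_succ_lt_succ hk)

lemma nonempty_of_gcdimLE {n : ℕ} (h : gcdimLE R C n M) :
    Nonempty (TotallyReflexiveResolution C M n) := by
  induction n generalizing M with
  | zero => exact ⟨ofReflexive h⟩
  | succ n ih =>
    obtain ⟨X, K, f, g, hf, hg, hex, hX, hK⟩ := h
    exact (ih hK).map fun Q ↦ Q.cons hX ⟨hf, hg, LinearMap.exact_iff.2 hex⟩

variable {n : ℕ} (Q : TotallyReflexiveResolution C M n)

/-- The differentials of the `C`-dual `Hom(term 0, C) → Hom(term 1, C) → ⋯`. -/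
def dualD (l : ℕ) : (Q.term l →ₗ[R] C) →ₗ[R] (Q.term (l + 1) →ₗ[R] C) :=
  LinearMap.lcomp R C (Q.π (l + 1)) ∘ₗ LinearMap.lcomp R C (Q.ι l)

lemma exact_lcomp_π_dualD (l : ℕ) :
    Function.Exact (LinearMap.lcomp R C (Q.π l)) (Q.dualD l) := by
  have dual_exact := LinearMap.exact_lcomp_of_exact_of_surjective C (Q.isShortExact l).exact
    (Q.isShortExact l).surjective
  exact (LinearMap.lcomp_injective_of_surjective _
    (Q.isShortExact (l + 1)).surjective).comp_exact_iff_exact.2 dual_exact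

lemma dualD_comp_dualD (l : ℕ) : Q.dualD (l + 1) ∘ₗ Q.dualD l = 0 := by
  refine LinearMap.ext fun φ ↦ ?_
  exact (Q.exact_lcomp_π_dualD (l + 1)).apply_apply_eq_zero (LinearMap.lcomp R C (Q.ι l) φ)

lemma exact_term (l : ℕ) :
    Function.Exact (Q.ι (l + 1) ∘ₗ Q.π (l + 2)) (Q.ι l ∘ₗ Q.π (l + 1)) := by
  have exact_middle := (Q.isShortExact (l + 1)).exact
  exact (Q.isShortExact (l + 2)).surjective.comp_exact_iff_exact.2
    ((Q.isShortExact l).injective.comp_exact_iff_exact.2 exact_middle)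

lemma isHomAcyclicAbove_dualD : IsHomAcyclicAbove Q.dualD C 0 where
  subsingleton_ext l j := (Q.reflexive l).subsingleton_ext_dual j
  exact_lcomp {l} _ := by
    let biduality (k : ℕ) : Q.term k ≃ₗ[R] ((Q.term k →ₗ[R] C) →ₗ[R] C) :=
      LinearEquiv.ofBijective (bidualityMap R C (Q.term k)) (Q.reflexive k).2.1
    exact (Function.Exact.iff_of_ladder_linearEquiv (e₁ := biduality (l + 2))
      (e₂ := biduality (l + 1)) (e₃ := biduality l) (f₁₂ := Q.ι (l + 1) ∘ₗ Q.π (l + 2))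
      (f₂₃ := Q.ι l ∘ₗ Q.π (l + 1)) rfl rfl).2 (Q.exact_term l)

lemma nonempty_ext_syz_equiv (q j : ℕ) :
    Nonempty (ModExt R (Q.syz q) C (j + 1) ≃ₗ[R] ModExt R M C (q + j + 1)) := by
  induction q generalizing j with
  | zero =>
    rw [Q.syz_zero, zero_add]
    exact ⟨LinearEquiv.refl R _⟩
  | succ q ih =>
    rw [add_right_comm q 1 j]
    exact (ih (j + 1)).map
      ((Q.isShortExact q).extShiftEquiv (Q.reflexive q).subsingleton_ext j).trans

lemma nonempty_cohomology_dualD_equiv (q : ℕ) :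
    Nonempty (Cohomology (Q.dualD q) (Q.dualD (q + 1)) ≃ₗ[R] ExtM R M C (q + 1)) := by
  have cohomology_equiv : Cohomology (Q.dualD q) (Q.dualD (q + 1)) ≃ₗ[R]
      (Q.syz (q + 1) →ₗ[R] C) ⧸ LinearMap.range (LinearMap.lcomp R C (Q.ι q)) :=
    cohomologyCompEquiv
      (LinearMap.lcomp_injective_of_surjective _ (Q.isShortExact (q + 1)).surjective)
      (Q.exact_lcomp_π_dualD (q + 1))
  exact (Q.nonempty_ext_syz_equiv q 0).map fun e ↦ cohomology_equiv ≪≫ₗ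
    (Q.isShortExact q).quotRangeLcompEquivExtOne ((Q.reflexive q).subsingleton_ext 0) ≪≫ₗ
    e ≪≫ₗ (extMEquivExt M C q).symm

end TotallyReflexiveResolution

lemma TotallyReflexiveResolution.finite {n : ℕ} (Q : TotallyReflexiveResolution C M n) :
    Module.Finite R M := by
  have := (Q.reflexive 0).1
  exact Q.syz_zero ▸ Module.Finite.of_surjective (Q.π 0) (Q.isShortExact 0).surjective

lemma TotallyReflexiveResolution.exists_isWeaklyRegular [IsNoetherianRing R]
    [Module.Finite R C] {n : ℕ} (Q : TotallyReflexiveResolution C M n) (i : ℕ) :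
    ∃ rs : List R, rs.length = i + 1 ∧ RingTheory.Sequence.IsWeaklyRegular C rs ∧
      ∀ r ∈ rs, r ∈ Module.annihilator R (ExtM R M C (i + 1)) := by
  have := Q.finite
  let e (l : ℕ) := (Q.nonempty_cohomology_dualD_equiv l).some
  have finite_cohomology (l : ℕ) : Module.Finite R (Cohomology (Q.dualD l) (Q.dualD (l + 1))) :=
    have := ModuleCat.finite_ext R M C (l + 1)
    .equiv ((extMEquivExt M C l).symm ≪≫ₗ (e l).symm)
  rw [← (e i).annihilator_eq]
  exact Q.isHomAcyclicAbove_dualD.exists_isWeaklyRegular Q.dualD_comp_dualD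
    (fun l hl ↦ have := Q.subsingleton_term hl; inferInstance) (by lia)

end Resolution

section Grade

open RingTheory.Sequence

variable {R} {C M E : ModuleCat.{u} R} {rs : List R}

lemma IsSemidualizing.isWeaklyRegular (hC : IsSemidualizing R C) (h : IsWeaklyRegular C rs) :
    IsWeaklyRegular R rs := by
  have homothety : R ≃ₗ[R] (C →ₗ[R] C) :=
    .ofBijective (LinearMap.toSpanSingleton R (C →ₗ[R] C) LinearMap.id) hC.2.1
  exact (homothety.isWeaklyRegular_congr rs).2 (isWeaklyRegular_linearMap h hC.subsingleton_ext)

lemma length_le_gradeR (h : IsWeaklyRegular R rs)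
    (hann : ∀ r ∈ rs, r ∈ Module.annihilator R E) : (rs.length : ℕ∞) ≤ gradeR R E := by
  refine le_sInf ?_
  rintro - ⟨j, hj, rfl⟩
  by_contra! lt_length
  exact hj (subsingleton_extM
    (subsingleton_ext_of_isWeaklyRegular h hann (Nat.cast_lt.1 lt_length)))

lemma exists_gcdimLE_of_gcdim_ne_top (h : gcdim R C M ≠ ⊤) : ∃ n, gcdimLE R C n M := by
  contrapose! h
  simp [gcdim, h]

end Grade

theorem statement8_general [IsNoetherianRing R] (C : ModuleCat.{u} R) (hC : IsSemidualizing R C)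
    (M : ModuleCat.{u} R) (hfin : gcdim R C M ≠ ⊤) :
    ∀ i : ℕ, 0 < i → (i : ℕ∞) ≤ gradeR R (ExtM R M C i) := by
  rintro (_ | i) hi
  · contradiction
  have := hC.1
  obtain ⟨n, hn⟩ := exists_gcdimLE_of_gcdim_ne_top hfin
  obtain ⟨Q⟩ := TotallyReflexiveResolution.nonempty_of_gcdimLE hn
  obtain ⟨rs, hlen, C_regular, hann⟩ := Q.exists_isWeaklyRegular i
  simpa only [hlen] using length_le_gradeR (hC.isWeaklyRegular C_regular) hann

/-- if `M` is a finite module of finite `G_C`-dimension, then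
`grade_R(Ext_R^i(M,C)) ≥ i` for every `i > 0`. -/
theorem statement8 [IsNoetherianRing R] (hsp : IsSemiperfectRing R)
    (C : ModuleCat.{u} R) (hC : IsSemidualizing R C)
    (M : ModuleCat.{u} R) (hMfin : Module.Finite R ↥M)
    (hfin : gcdim R C M ≠ ⊤) :
    ∀ i : ℕ, 0 < i → (i : ℕ∞) ≤ gradeR R (ExtM R M C i) :=
  statement8_general R C hC M hfin

end
end

section
/- Let k > 0 be an integer and let 0 → N → X_k → ⋯ → X_1 → M → 0 be an exact sequence of finite R-modules with Ext_R^i(X_j, C) = 0 for all i > 0 and all j = 1, …, k. If r.grade_R(M,C) > k, then r.grade_R(N,C) = r.grade_R(M,C) − k (with the convention that both sides are ∞ when r.grade_R(M,C) = ∞). -/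
/-!
Break the resolution into short exact sequences `0 → K → X → M → 0`. Since `Ext^i(X, C) = 0` for
`i > 0`, the connecting maps `Ext^i(K, C) → Ext^(i+1)(M, C)` are bijective for `i > 0`; composing
them along the resolution, `Ext^i(N, C)` vanishes if and only if `Ext^(i+k)(M, C)` does. When
`r.grade(M, C) > k`, every positive degree of non-vanishing for `M` exceeds `k`, hence arises from
one for `N` in this way. The connecting maps live on `Abelian.Ext`; its vanishing in positive
degrees agrees with that of the left derived `Ext`, both being computed on a projective resolution.
-/

open CategoryTheory TensorProduct

noncomputable section

universe u

variable (R : Type u) [CommRing R]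

section AbelianCategory

universe w

variable {𝒜 : Type*} [Category* 𝒜] [Abelian 𝒜] {X Y : 𝒜} {n : ℕ}

theorem subsingleton_derivedExt_succ_iff (A : Type*) [Ring A] [Linear A 𝒜] [EnoughProjectives 𝒜]
    (P : ProjectiveResolution X) :
    Subsingleton (((Ext A 𝒜 (n + 1)).obj (Opposite.op X)).obj Y) ↔
      ∀ f : P.complex.X (n + 1) ⟶ Y, P.complex.d (n + 2) (n + 1) ≫ f = 0 →
        ∃ g : P.complex.X n ⟶ Y, P.complex.d (n + 1) n ≫ g = f := by
  rw [← ModuleCat.isZero_iff_subsingleton, (P.isoExt (n + 1) Y).isZero_iff,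
    ← HomologicalComplex.exactAt_iff_isZero_homology,
    HomologicalComplex.exactAt_iff' _ n (n + 1) (n + 2) (by simp) (by simp),
    ShortComplex.moduleCat_exact_iff]
  rfl

variable [HasExt.{w} 𝒜]

theorem subsingleton_abelianExt_succ_iff (P : ProjectiveResolution X) :
    Subsingleton (Abelian.Ext.{w} X Y (n + 1)) ↔
      ∀ f : P.complex.X (n + 1) ⟶ Y, P.complex.d (n + 2) (n + 1) ≫ f = 0 →
        ∃ g : P.complex.X n ⟶ Y, P.complex.d (n + 1) n ≫ g = f := by
  constructor
  · intro _ f hf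
    exact (P.extMk_eq_zero_iff f (n + 2) rfl hf n rfl).1 (Subsingleton.elim _ _)
  · intro h
    refine subsingleton_of_forall_eq 0 fun α ↦ ?_
    obtain ⟨f, hf, rfl⟩ := P.extMk_surjective α (n + 2) rfl
    exact (P.extMk_eq_zero_iff f (n + 2) rfl hf n rfl).2 (h f hf)

theorem subsingleton_derivedExt_succ_iff_abelianExt (A : Type*) [Ring A] [Linear A 𝒜]
    [EnoughProjectives 𝒜] :
    Subsingleton (((Ext A 𝒜 (n + 1)).obj (Opposite.op X)).obj Y) ↔
      Subsingleton (Abelian.Ext.{w} X Y (n + 1)) :=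
  (subsingleton_derivedExt_succ_iff A (projectiveResolution X)).trans
    (subsingleton_abelianExt_succ_iff (projectiveResolution X)).symm

theorem bijective_precomp_extClass {S : ShortComplex 𝒜} (hS : S.ShortExact)
    [Subsingleton (Abelian.Ext.{w} S.X₂ Y n)] [Subsingleton (Abelian.Ext.{w} S.X₂ Y (n + 1))] :
    Function.Bijective (hS.extClass.precomp Y (add_comm 1 n)) := by
  constructor
  · rw [injective_iff_map_eq_zero]
    intro x hx
    obtain ⟨y, rfl⟩ := Abelian.Ext.contravariant_sequence_exact₁ hS Y x (add_comm 1 n) hx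
    rw [Subsingleton.elim y 0, Abelian.Ext.comp_zero]
  · intro z
    exact Abelian.Ext.contravariant_sequence_exact₃ hS Y z (Subsingleton.elim _ _) (add_comm 1 n)

end AbelianCategory

section ExtVanishing

variable {R} {C N M : ModuleCat.{u} R}

theorem subsingleton_extM_congr (e : N ≅ M) (i : ℕ) :
    Subsingleton (ExtM R N C i) ↔ Subsingleton (ExtM R M C i) := by
  simp only [← ModuleCat.isZero_iff_subsingleton]
  exact (((Ext R (ModuleCat.{u} R) i).mapIso e.op.symm).app C).isZero_iff

theorem subsingleton_extM_X₁_iff_X₃ {S : ShortComplex (ModuleCat.{u} R)} (hS : S.ShortExact)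
    {n : ℕ} (h₁ : Subsingleton (ExtM R S.X₂ C (n + 1)))
    (h₂ : Subsingleton (ExtM R S.X₂ C (n + 2))) :
    Subsingleton (ExtM R S.X₁ C (n + 1)) ↔ Subsingleton (ExtM R S.X₃ C (n + 2)) := by
  simp only [ExtM, subsingleton_derivedExt_succ_iff_abelianExt.{u}] at h₁ h₂ ⊢
  exact (Equiv.ofBijective _ (bijective_precomp_extClass hS)).subsingleton_congr

theorem ExtVanishingChain.subsingleton_extM_iff {k : ℕ} (h : ExtVanishingChain R C k N M) {i : ℕ}
    (hi : 0 < i) : Subsingleton (ExtM R N C i) ↔ Subsingleton (ExtM R M C (i + k)) := by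
  induction k generalizing M with
  | zero =>
    obtain ⟨e⟩ := h
    exact subsingleton_extM_congr e.toModuleIso i
  | succ k ih =>
    obtain ⟨X, K, f, g, hf, hg, hfg, -, hX, hK⟩ := h
    have hexact : Function.Exact f g := LinearMap.exact_iff.2 hfg
    have hS : (ModuleCat.shortComplexOfCompEqZero f g hexact.linearMap_comp_eq_zero).ShortExact :=
      ModuleCat.shortComplex_shortExact _ hexact hf hg
    obtain ⟨n, hn⟩ : ∃ n, i + k = n + 1 := Nat.exists_eq_add_one.2 (by omega)
    rw [ih hK, ← add_assoc, hn]
    exact subsingleton_extM_X₁_iff_X₃ hS (hX _ n.succ_pos) (hX _ (n + 1).succ_pos)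

end ExtVanishing

section ReducedGrade

theorem sInf_image_natCast_add (s : Set ℕ) (k : ℕ) :
    sInf ((fun i : ℕ ↦ (i : ℕ∞)) '' s) + k =
      sInf ((fun i : ℕ ↦ (i : ℕ∞)) '' ((· + k) '' s)) := by
  simp only [sInf_image, iInf_image, Nat.cast_add, ENat.iInf₂_add]

variable {R} {C N M : ModuleCat.{u} R} {k : ℕ}

theorem rgrade_le_of_not_subsingleton {i : ℕ} (hi : 0 < i)
    (h : ¬ Subsingleton (ExtM R M C i)) : rgrade R C M ≤ i :=
  sInf_le ⟨i, ⟨hi, h⟩, rfl⟩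

theorem ExtVanishingChain.setOf_not_subsingleton_extM_eq_image_add
    (h : ExtVanishingChain R C k N M) (hk : (k : ℕ∞) < rgrade R C M) :
    {j | 0 < j ∧ ¬ Subsingleton (ExtM R M C j)} =
      (· + k) '' {i | 0 < i ∧ ¬ Subsingleton (ExtM R N C i)} := by
  ext j
  constructor
  · rintro ⟨hj, hM⟩
    have hkj : k < j := by exact_mod_cast hk.trans_le (rgrade_le_of_not_subsingleton hj hM)
    obtain ⟨i, rfl⟩ := Nat.exists_eq_add_of_le' hkj.le
    have hi : 0 < i := by omega
    exact ⟨i, ⟨hi, mt (h.subsingleton_extM_iff hi).1 hM⟩, rfl⟩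
  · rintro ⟨i, ⟨hi, hN⟩, rfl⟩
    exact ⟨Nat.add_pos_left hi k, mt (h.subsingleton_extM_iff hi).2 hN⟩

theorem statement10_general (hchain : ExtVanishingChain R C k N M)
    (hgr : (k : ℕ∞) < rgrade R C M) : rgrade R C N + (k : ℕ∞) = rgrade R C M := by
  unfold rgrade
  rw [hchain.setOf_not_subsingleton_extM_eq_image_add hgr, sInf_image_natCast_add]

end ReducedGrade

/-- given an exact sequence `0 → N → X_k → ⋯ → X_1 → M → 0` with
`Ext_R^i(X_j, C) = 0` for all `i > 0`, if `r.grade(M,C) > k` then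
`r.grade(N,C) = r.grade(M,C) - k` (stated additively in `ℕ∞`). -/
theorem statement10 [IsNoetherianRing R] (hsp : IsSemiperfectRing R)
    (C : ModuleCat.{u} R) (hC : IsSemidualizing R C)
    (k : ℕ) (hk : 0 < k)
    (N M : ModuleCat.{u} R) (hNfin : Module.Finite R ↥N)
    (hMfin : Module.Finite R ↥M)
    (hchain : ExtVanishingChain R C k N M)
    (hgr : (k : ℕ∞) < rgrade R C M) :
    rgrade R C N + (k : ℕ∞) = rgrade R C M :=
  statement10_general hchain hgr

end
end
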